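/- Let N ∈ ℕ and let f₀ : ℝ³ × ℝ³ → ℝ be C^{N+1} with sup_{x,v} ⟨x⟩^{N+5} |∂_v^α f₀(x,v)| < ∞ for all |α| ≤ N+1. There exist constants C_α ∈ ℝ (independent of f₀) such that the solution f(t,x,v) = f₀(x − vt, v) of the free transport equation satisfies, for all t ≥ 2 and x ∈ ℝ³: | t³ ∫_{ℝ³} f(t,x,v) dv − Σ_{|α| ≤ N} (C_α / t^{|α|}) ∫_{ℝ³} y^α ∂_v^α f₀(y, x/t) dy | ≤ (C / t^{N+1}) Σ_{|α| = N+1} sup_{z,v} ⟨z⟩^{N+5} |∂_v^α f₀(z,v)|, for some constant C depending only on N. -/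

import Mathlib

open MeasureTheory Real

abbrev E3 := EuclideanSpace ℝ (Fin 3)

noncomputable def e3 (i : Fin 3) : E3 := EuclideanSpace.single i 1

/-- The velocity derivative `∂_{vⁱ}` for functions of `(x,v)`. -/
noncomputable def Dv (i : Fin 3) (h : E3 × E3 → ℝ) : E3 × E3 → ℝ :=
  fun q => fderiv ℝ h q (0, e3 i)

/-- Iterated velocity derivatives `∂ᵥ^m`. -/
noncomputable def Dvpow (m : Fin 3 → ℕ) (h : E3 × E3 → ℝ) : E3 × E3 → ℝ :=
  (Dv 0)^[m 0] ((Dv 1)^[m 1] ((Dv 2)^[m 2] h))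

/-- Multi-indices of length `≤ N`. -/
def MIdx (N : ℕ) : Finset (Fin 3 → ℕ) :=
  (Finset.Iic (fun _ => N : Fin 3 → ℕ)).filter fun m => (∑ i, m i) ≤ N

/-- Multi-indices of length exactly `N + 1`. -/
def MIdxTop (N : ℕ) : Finset (Fin 3 → ℕ) :=
  (Finset.Iic (fun _ => N + 1 : Fin 3 → ℕ)).filter fun m => (∑ i, m i) = N + 1

/-!
Substituting `y = x - t v` turns `t³ ∫ f₀(x - t v, v) dv` into `∫ f₀(y, (x - y)/t) dy`. Since
`(x - y)/t` differs from `x/t` by `-y/t`, expanding `f₀(y, ·)` to order `N` about `x/t` produces the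
terms `(-1)^|α| / (α! t^|α|) y^α ∂_v^α f₀(y, x/t)`. The remainder is at most a constant times
`(|y|/t)^(N+1) ⟨y⟩^(-(N+5))`, and the weight left over, `⟨y⟩⁻⁴`, is integrable on `ℝ³`.
-/

open scoped Nat

section Taylor

variable {E F : Type*} [NormedAddCommGroup E] [NormedSpace ℝ E]
  [NormedAddCommGroup F] [NormedSpace ℝ F]

theorem norm_le_pow_div_factorial_of_norm_deriv_le {R R' : ℝ → F} {M : ℝ} {k : ℕ}
    (hR : ∀ s, HasDerivAt R (R' s) s) (hR₀ : R 0 = 0) (hR' : ∀ s, ‖R' s‖ ≤ |s| ^ k / k ! * M)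
    (h : ℝ) : ‖R h‖ ≤ |h| ^ (k + 1) / (k + 1)! * M := by
  wlog hh : 0 ≤ h generalizing R R' h
  · have hneg : ∀ s, HasDerivAt (fun s => R (-s)) (-R' (-s)) s := fun s => by
      simpa [Function.comp_def] using (hR (-s)).scomp s (hasDerivAt_neg s)
    simpa using this hneg (by simpa using hR₀) (fun s => by simpa using hR' (-s)) (-h)
      (by linarith)
  have hB (s : ℝ) : HasDerivAt (fun s => s ^ (k + 1) / (k + 1)! * M) (s ^ k / k ! * M) s := by
    refine (((hasDerivAt_pow (k + 1) s).div_const _).mul_const M).congr_deriv ?_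
    rw [Nat.factorial_succ]
    push_cast
    field_simp
  have hbound := image_norm_le_of_norm_deriv_right_le_deriv_boundary
    (fun s _ => (hR s).continuousAt.continuousWithinAt) (fun s _ => (hR s).hasDerivWithinAt)
    (by simp [hR₀]) hB (fun s hs => by simpa [abs_of_nonneg hs.1] using hR' s)
    (Set.right_mem_Icc.2 hh)
  rwa [abs_of_nonneg hh]

theorem hasDerivAt_sum_pow_div_factorial_smul (a : ℕ → F) (k : ℕ) (s : ℝ) :
    HasDerivAt (fun s : ℝ => ∑ c ∈ Finset.range (k + 1), (s ^ c / c !) • a c)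
      (∑ c ∈ Finset.range k, (s ^ c / c !) • a (c + 1)) s := by
  have hterm (c : ℕ) (_ : c ∈ Finset.range (k + 1)) :
      HasDerivAt (fun s : ℝ => (s ^ c / c !) • a c) ((c * s ^ (c - 1) / c !) • a c) s :=
    ((hasDerivAt_pow c s).div_const _).smul_const _
  refine (HasDerivAt.fun_sum hterm).congr_deriv ?_
  rw [Finset.sum_range_succ']
  simp only [Nat.cast_zero, zero_mul, zero_div, zero_smul, add_zero, Nat.add_sub_cancel]
  refine Finset.sum_congr rfl fun c _ => ?_
  rw [Nat.factorial_succ]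
  push_cast
  congr 1
  field_simp

/-- The operator `∂_u` of differentiation along the constant vector `u`, applied to functions on a
normed space. It is a Fréchet derivative evaluated at `u` rather than a `lineDeriv`, so that
`Dv i` is definitionally `dirDeriv (0, e3 i)`. -/
noncomputable def dirDeriv (u : E) (g : E → F) : E → F :=
  fun q => fderiv ℝ g q u

theorem contDiff_dirDeriv {u : E} {g : E → F} {n : ℕ} (hg : ContDiff ℝ (n + 1 : ℕ) g) :
    ContDiff ℝ n (dirDeriv u g) :=
  (hg.fderiv_right (m := n) (by norm_cast)).clm_apply contDiff_const

theorem contDiff_iterate_dirDeriv {u : E} {n k : ℕ} {g : E → F}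
    (hg : ContDiff ℝ (n + k : ℕ) g) : ContDiff ℝ n ((dirDeriv u)^[k] g) := by
  induction k generalizing g with
  | zero => exact hg
  | succ k ih => exact ih (contDiff_dirDeriv hg)

theorem hasDerivAt_comp_add_smul {g : E → F} (hg : Differentiable ℝ g) (q u : E) (s : ℝ) :
    HasDerivAt (fun s : ℝ => g (q + s • u)) (dirDeriv u g (q + s • u)) s := by
  have hline : HasDerivAt (fun s : ℝ => q + s • u) u s := by
    simpa using ((hasDerivAt_id s).smul_const u).const_add q
  exact (hg _).hasFDerivAt.comp_hasDerivAt s hline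

theorem norm_sub_taylor_line_le {u q : E} {M : ℝ} {n : ℕ} {g : E → F} (hg : ContDiff ℝ n g)
    (hM : ∀ s : ℝ, ‖(dirDeriv u)^[n] g (q + s • u)‖ ≤ M) (h : ℝ) :
    ‖g (q + h • u) - ∑ c ∈ Finset.range n, (h ^ c / c !) • (dirDeriv u)^[c] g q‖
      ≤ |h| ^ n / n ! * M := by
  induction n generalizing g h with
  | zero => simpa using hM h
  | succ k ih =>
    have hg' : Differentiable ℝ g := hg.differentiable (by simp)
    exact norm_le_pow_div_factorial_of_norm_deriv_le
      (fun s => (hasDerivAt_comp_add_smul hg' q u s).sub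
        (hasDerivAt_sum_pow_div_factorial_smul (fun c => (dirDeriv u)^[c] g q) k s))
      (by simp [Finset.sum_range_succ']) (ih (contDiff_dirDeriv hg) hM) h

/-- The iterated derivative `∂^m = ∏ i, ∂_{u i} ^ m i` along a finite family of vectors `u`,
for a multi-index `m`. The derivatives along the last vector are taken first, as in `Dvpow`. -/
noncomputable def iterDirDeriv : {d : ℕ} → (Fin d → E) → (Fin d → ℕ) → (E → F) → E → F
  | 0, _, _, g => g
  | d + 1, u, m, g =>
    iterDirDeriv (Fin.init u) (Fin.init m) ((dirDeriv (u (Fin.last d)))^[m (Fin.last d)] g)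

theorem contDiff_iterDirDeriv {d n : ℕ} {u : Fin d → E} {m : Fin d → ℕ} {g : E → F}
    (hg : ContDiff ℝ (n + ∑ i, m i : ℕ) g) : ContDiff ℝ n (iterDirDeriv u m g) := by
  induction d generalizing g with
  | zero => simpa [iterDirDeriv] using hg
  | succ d ih =>
    rw [Fin.sum_univ_castSucc, ← add_assoc] at hg
    exact ih (contDiff_iterate_dirDeriv hg)

theorem iterDirDeriv_snoc {d : ℕ} (u : Fin (d + 1) → E) (m : Fin d → ℕ) (c : ℕ) (g : E → F) :
    iterDirDeriv u (Fin.snoc m c) g =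
      iterDirDeriv (Fin.init u) m ((dirDeriv (u (Fin.last d)))^[c] g) := by
  simp [iterDirDeriv]

@[simp]
theorem iterDirDeriv_zero {d : ℕ} (u : Fin d → E) (g : E → F) : iterDirDeriv u 0 g = g := by
  induction d generalizing g with
  | zero => rfl
  | succ d ih => exact ih _ _

/-- The multi-indices `m : Fin d → ℕ` of length `∑ i, m i < n`. The inequality is strict so that
the Taylor polynomial with remainder of order `n` is a sum over `multiIndicesLT d n`. -/
def multiIndicesLT (d n : ℕ) : Finset (Fin d → ℕ) :=
  (Finset.range n).biUnion (Finset.Nat.antidiagonalTuple d)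

@[simp]
theorem mem_multiIndicesLT {d n : ℕ} {m : Fin d → ℕ} :
    m ∈ multiIndicesLT d n ↔ ∑ i, m i < n := by
  simp [multiIndicesLT, Finset.Nat.mem_antidiagonalTuple]

theorem sum_multiIndicesLT_succ {A : Type*} [AddCommMonoid A] (d n : ℕ)
    (a : (Fin (d + 1) → ℕ) → A) :
    ∑ m ∈ multiIndicesLT (d + 1) n, a m =
      ∑ c ∈ Finset.range n, ∑ m ∈ multiIndicesLT d (n - c), a (Fin.snoc m c) := by
  rw [Finset.sum_sigma']
  refine Finset.sum_bij' (fun m _ => ⟨m (Fin.last d), Fin.init m⟩) (fun p _ => Fin.snoc p.2 p.1)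
    ?_ ?_ ?_ ?_ ?_
  · intro m hm
    simp only [mem_multiIndicesLT, Fin.sum_univ_castSucc] at hm
    simp only [Finset.mem_sigma, Finset.mem_range, mem_multiIndicesLT, Fin.init]
    omega
  · rintro ⟨c, m⟩ hm
    simp only [Finset.mem_sigma, Finset.mem_range, mem_multiIndicesLT] at hm
    simp only [mem_multiIndicesLT, Fin.sum_snoc]
    omega
  all_goals simp

theorem sum_pow_div_factorial_mul (a b : ℝ) (n : ℕ) :
    ∑ c ∈ Finset.range (n + 1), b ^ c / c ! * (a ^ (n - c) / (n - c)!) = (a + b) ^ n / n ! := by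
  rw [add_comm a b, add_pow, Finset.sum_div]
  refine Finset.sum_congr rfl fun c hc => ?_
  rw [Nat.cast_choose ℝ (Finset.mem_range_succ_iff.1 hc)]
  field_simp

theorem norm_sub_sum_smul_le_of_norm_sub_le {n : ℕ} {h a M : ℝ} {A : F} {B P : ℕ → F}
    (hA : ‖A - ∑ c ∈ Finset.range n, (h ^ c / c !) • B c‖ ≤ |h| ^ n / n ! * M)
    (hB : ∀ c < n, ‖B c - P c‖ ≤ a ^ (n - c) / (n - c)! * M) :
    ‖A - ∑ c ∈ Finset.range n, (h ^ c / c !) • P c‖ ≤ (a + |h|) ^ n / n ! * M := by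
  have hsum : ‖∑ c ∈ Finset.range n, (h ^ c / c !) • (B c - P c)‖ ≤
      ∑ c ∈ Finset.range n, |h| ^ c / c ! * (a ^ (n - c) / (n - c)!) * M := by
    refine norm_sum_le_of_le _ fun c hc => ?_
    rw [norm_smul, Real.norm_eq_abs, abs_div, abs_pow, Nat.abs_cast, mul_assoc]
    gcongr
    exact hB c (Finset.mem_range.1 hc)
  calc ‖A - ∑ c ∈ Finset.range n, (h ^ c / c !) • P c‖
    _ = ‖(A - ∑ c ∈ Finset.range n, (h ^ c / c !) • B c) +
          ∑ c ∈ Finset.range n, (h ^ c / c !) • (B c - P c)‖ := by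
        simp [smul_sub]
    _ ≤ |h| ^ n / n ! * M +
          ∑ c ∈ Finset.range n, |h| ^ c / c ! * (a ^ (n - c) / (n - c)!) * M :=
        norm_add_le_of_le hA hsum
    _ = (a + |h|) ^ n / n ! * M := by
        rw [← Finset.sum_mul, ← sum_pow_div_factorial_mul, Finset.sum_range_succ, Nat.sub_self,
          pow_zero, Nat.factorial_zero, Nat.cast_one, div_one, mul_one]
        ring

theorem add_sum_smul_mem {ι : Type*} {u : ι → E} {s : Set E}
    (hs : ∀ p ∈ s, ∀ i, ∀ a : ℝ, p + a • u i ∈ s) {q : E} (hq : q ∈ s) (I : Finset ι)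
    (h : ι → ℝ) : q + ∑ i ∈ I, h i • u i ∈ s := by
  classical
  induction I using Finset.induction_on with
  | empty => simpa using hq
  | insert i I hi ih =>
    rw [Finset.sum_insert hi, add_comm (h i • u i), ← add_assoc]
    exact hs _ ih i (h i)

theorem norm_sub_taylor_le {d n : ℕ} {u : Fin d → E} {s : Set E}
    (hs : ∀ p ∈ s, ∀ i, ∀ a : ℝ, p + a • u i ∈ s) {M : ℝ} {g : E → F} (hg : ContDiff ℝ n g)
    (hM : ∀ m : Fin d → ℕ, ∑ i, m i = n → ∀ p ∈ s, ‖iterDirDeriv u m g p‖ ≤ M)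
    {q : E} (hq : q ∈ s) (h : Fin d → ℝ) :
    ‖g (q + ∑ i, h i • u i) -
        ∑ m ∈ multiIndicesLT d n, (∏ i, h i ^ m i / (m i)!) • iterDirDeriv u m g q‖
      ≤ (∑ i, |h i|) ^ n / n ! * M := by
  induction d generalizing n g with
  | zero =>
    cases n with
    | zero => simpa [multiIndicesLT, iterDirDeriv] using hM 0 rfl q hq
    | succ n =>
      have hidx : multiIndicesLT 0 (n + 1) = {0} := by ext m; simp [Subsingleton.elim m 0]
      simp [hidx, iterDirDeriv]
  | succ d ih =>
    have hs' (p : E) (hp : p ∈ s) (i : Fin d) (a : ℝ) : p + a • Fin.init u i ∈ s :=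
      hs p hp i.castSucc a
    have hmem : q + ∑ i : Fin d, h i.castSucc • u i.castSucc ∈ s :=
      add_sum_smul_mem hs' hq _ _
    have hterm (c : ℕ) (m : Fin d → ℕ) :
        (∏ i, h i ^ (Fin.snoc m c : Fin (d + 1) → ℕ) i /
            ((Fin.snoc m c : Fin (d + 1) → ℕ) i)! : ℝ) • iterDirDeriv u (Fin.snoc m c) g q =
          (h (Fin.last d) ^ c / c !) • (∏ i : Fin d, h i.castSucc ^ m i / (m i)!) •
            iterDirDeriv (Fin.init u) m ((dirDeriv (u (Fin.last d)))^[c] g) q := by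
      rw [iterDirDeriv_snoc, smul_smul, Fin.prod_univ_castSucc, mul_comm]
      simp
    simp only [sum_multiIndicesLT_succ, hterm, ← Finset.smul_sum, Fin.sum_univ_castSucc,
      ← add_assoc]
    -- Expand along the last vector, then each coefficient along the others; the remainders add up
    -- by the binomial theorem.
    refine norm_sub_sum_smul_le_of_norm_sub_le
      (norm_sub_taylor_line_le hg (fun a => ?_) (h (Fin.last d))) fun c hc => ?_
    · have := hM (Fin.snoc 0 n) (by simp) _ (hs _ hmem (Fin.last d) a)
      simpa [iterDirDeriv_snoc] using this
    · have hgc : ContDiff ℝ (n - c : ℕ) ((dirDeriv (u (Fin.last d)))^[c] g) :=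
        contDiff_iterate_dirDeriv (by rwa [Nat.sub_add_cancel hc.le])
      refine ih hs' hgc (fun m hm p hp => ?_) (fun i => h i.castSucc)
      have := hM (Fin.snoc m c) (by simp [hm, hc.le]) p hp
      simpa [iterDirDeriv_snoc] using this

end Taylor

section JapaneseBracket

variable {E : Type*} [NormedAddCommGroup E]

/-- The Japanese bracket `⟨y⟩ = (1 + ‖y‖²)^{1/2}`, the weight measuring spatial decay. -/
noncomputable def japaneseBracket (y : E) : ℝ :=
  √(1 + ‖y‖ ^ 2)

theorem one_le_japaneseBracket (y : E) : 1 ≤ japaneseBracket y :=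
  Real.one_le_sqrt.2 (by simp)

theorem japaneseBracket_pos (y : E) : 0 < japaneseBracket y :=
  zero_lt_one.trans_le (one_le_japaneseBracket y)

theorem norm_le_japaneseBracket (y : E) : ‖y‖ ≤ japaneseBracket y :=
  Real.le_sqrt_of_sq_le (by simp)

variable [NormedSpace ℝ E] [FiniteDimensional ℝ E] [MeasurableSpace E] [BorelSpace E]
  {μ : Measure E} [μ.IsAddHaarMeasure] {r : ℕ}

theorem integrable_inv_japaneseBracket_pow (hr : Module.finrank ℝ E < r) :
    Integrable (fun y : E => (japaneseBracket y ^ r)⁻¹) μ := by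
  refine (integrable_rpow_neg_one_add_norm_sq (r := r) (by exact_mod_cast hr)).congr
    (.of_forall fun y => ?_)
  have hy : 0 ≤ 1 + ‖y‖ ^ 2 := by positivity
  simp only [japaneseBracket]
  rw [neg_div, Real.rpow_neg hy, Real.rpow_div_two_eq_sqrt _ hy, Real.rpow_natCast]

theorem integral_inv_japaneseBracket_pow_pos (hr : Module.finrank ℝ E < r) :
    0 < ∫ y : E, (japaneseBracket y ^ r)⁻¹ ∂μ := by
  have hpos (y : E) : 0 < (japaneseBracket y ^ r)⁻¹ := by
    have := japaneseBracket_pos y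
    positivity
  rw [integral_pos_iff_support_of_nonneg (fun y => (hpos y).le)
    (integrable_inv_japaneseBracket_pow hr), Function.support_eq_univ fun y => (hpos y).ne']
  exact Measure.measure_univ_pos.2 (NeZero.ne μ)

theorem integrable_of_japaneseBracket_pow_mul_norm_le {F : Type*} [NormedAddCommGroup F]
    (hr : Module.finrank ℝ E < r) {g : E → F} (hg : AEStronglyMeasurable g μ) {S : ℝ}
    (hS : ∀ y, japaneseBracket y ^ r * ‖g y‖ ≤ S) : Integrable g μ := by
  refine ((integrable_inv_japaneseBracket_pow hr).const_mul S).mono' hg (.of_forall fun y => ?_)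
  rw [← div_eq_mul_inv, le_div_iff₀' (pow_pos (japaneseBracket_pos y) r)]
  exact hS y

end JapaneseBracket

theorem pow_smul_integral_comp_sub_smul {E F : Type*} [NormedAddCommGroup E] [NormedSpace ℝ E]
    [FiniteDimensional ℝ E] [MeasurableSpace E] [BorelSpace E] [NormedAddCommGroup F]
    [NormedSpace ℝ F] (μ : Measure E) [μ.IsAddHaarMeasure] (f : E × E → F) {t : ℝ} (ht : 0 < t)
    (x : E) :
    t ^ Module.finrank ℝ E • ∫ v, f (x - t • v, v) ∂μ =
      ∫ y, f (y, t⁻¹ • (x - y)) ∂μ := by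
  have hscale := Measure.integral_comp_smul μ (fun z => f (x - z, t⁻¹ • z)) t
  have hshift := integral_sub_left_eq_self (μ := μ) (fun y => f (y, t⁻¹ • (x - y))) x
  simp only [inv_smul_smul₀ ht.ne'] at hscale
  simp only [sub_sub_cancel] at hshift
  rw [hscale, hshift, abs_of_pos (by positivity), smul_inv_smul₀ (by positivity)]

section Expansion

variable {d : ℕ} {F : Type*} [NormedAddCommGroup F] [NormedSpace ℝ F]

local notation "ℝᵈ" => EuclideanSpace ℝ (Fin d)

theorem abs_apply_le_japaneseBracket (y : ℝᵈ) (i : Fin d) : |y i| ≤ japaneseBracket y :=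
  (PiLp.norm_apply_le y i).trans (norm_le_japaneseBracket y)

theorem abs_prod_pow_le_japaneseBracket_pow {n : ℕ} {m : Fin d → ℕ} (hm : ∑ i, m i ≤ n)
    (y : ℝᵈ) : |∏ i, y i ^ m i| ≤ japaneseBracket y ^ n := by
  calc |∏ i, y i ^ m i|
    _ = ∏ i, |y i| ^ m i := by simp [Finset.abs_prod]
    _ ≤ ∏ i, japaneseBracket y ^ m i := by
        gcongr
        exact abs_apply_le_japaneseBracket y _
    _ = japaneseBracket y ^ ∑ i, m i := Finset.prod_pow_eq_pow_sum ..
    _ ≤ japaneseBracket y ^ n := pow_le_pow_right₀ (one_le_japaneseBracket y) hm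

theorem integrable_prod_pow_smul {n r : ℕ} (hr : d < r) {m : Fin d → ℕ} (hm : ∑ i, m i ≤ n)
    {g : ℝᵈ → F} (hg : AEStronglyMeasurable g) {S : ℝ}
    (hS : ∀ y, japaneseBracket y ^ (n + r) * ‖g y‖ ≤ S) :
    Integrable fun y => (∏ i, y i ^ m i) • g y := by
  have hmon : Continuous fun y : ℝᵈ => ∏ i, y i ^ m i := by fun_prop
  refine integrable_of_japaneseBracket_pow_mul_norm_le (by simpa using hr)
    (hmon.aestronglyMeasurable.smul hg) (S := S) fun y => ?_
  have hy := japaneseBracket_pos y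
  calc japaneseBracket y ^ r * ‖(∏ i, y i ^ m i) • g y‖
    _ ≤ japaneseBracket y ^ r * (japaneseBracket y ^ n * ‖g y‖) := by
        rw [norm_smul, Real.norm_eq_abs]
        gcongr
        exact abs_prod_pow_le_japaneseBracket_pow hm y
    _ = japaneseBracket y ^ (n + r) * ‖g y‖ := by ring
    _ ≤ S := hS y

/-- The velocity derivative `∂_v^m f` of a function `f (x, v)` on phase space, in any dimension;
`Dvpow` is the case `d = 3`. -/
noncomputable def velocityDeriv (m : Fin d → ℕ) (f : ℝᵈ × ℝᵈ → F) : ℝᵈ × ℝᵈ → F :=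
  iterDirDeriv (fun i => (0, EuclideanSpace.single i 1)) m f

theorem continuous_velocityDeriv {n : ℕ} {m : Fin d → ℕ} {f : ℝᵈ × ℝᵈ → F}
    (hf : ContDiff ℝ n f) (hm : ∑ i, m i ≤ n) : Continuous (velocityDeriv m f) :=
  (contDiff_iterDirDeriv (n := 0)
    (hf.of_le (by exact_mod_cast (zero_add _).trans_le hm))).continuous

/-- The coefficient `C_m = (-1)^|m| / m!` of the self-similar expansion. -/
noncomputable def expansionCoeff (m : Fin d → ℕ) : ℝ :=
  ∏ i, (-1) ^ m i / (m i)!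

theorem norm_sub_velocity_taylor_le {n : ℕ} {f : ℝᵈ × ℝᵈ → F} (hf : ContDiff ℝ n f)
    {t M : ℝ} (ht : 0 < t) (x y : ℝᵈ)
    (hM : ∀ m : Fin d → ℕ, ∑ i, m i = n → ∀ v, ‖velocityDeriv m f (y, v)‖ ≤ M) :
    ‖f (y, t⁻¹ • (x - y)) - ∑ m ∈ multiIndicesLT d n, (expansionCoeff m / t ^ ∑ i, m i) •
        (∏ i, y i ^ m i) • velocityDeriv m f (y, t⁻¹ • x)‖
      ≤ (∑ i, |y i| / t) ^ n / n ! * M := by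
  have htaylor := norm_sub_taylor_le
    (u := fun i => ((0 : ℝᵈ), EuclideanSpace.single i (1 : ℝ))) (s := {p | p.1 = y})
    (q := (y, t⁻¹ • x)) (by simp) hf (by rintro m hm ⟨_, v⟩ rfl; exact hM m hm v) rfl
    (fun i => -(y i / t))
  have hbase : (y, t⁻¹ • x) + ∑ i, -(y i / t) • ((0 : ℝᵈ), EuclideanSpace.single i (1 : ℝ)) =
      (y, t⁻¹ • (x - y)) := by
    ext1
    · simp [Prod.fst_sum]
    · ext j
      simp [Prod.snd_sum, Pi.single_apply, div_eq_inv_mul, sub_eq_add_neg]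
  have hcoeff (m : Fin d → ℕ) : ∏ i, (-(y i / t)) ^ m i / (m i)! =
      expansionCoeff m / t ^ (∑ i, m i) * ∏ i, y i ^ m i := by
    rw [expansionCoeff, ← Finset.prod_pow_eq_pow_sum, ← Finset.prod_div_distrib,
      ← Finset.prod_mul_distrib]
    refine Finset.prod_congr rfl fun i _ => ?_
    rw [neg_pow, div_pow]
    ring
  simp only [hbase, hcoeff, mul_smul, abs_neg, abs_div, abs_of_pos ht] at htaylor
  exact htaylor

theorem norm_sub_expansion_le_inv_japaneseBracket_pow {n r : ℕ} {f : ℝᵈ × ℝᵈ → F}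
    (hf : ContDiff ℝ n f) {S : (Fin d → ℕ) → ℝ}
    (hS : ∀ m : Fin d → ℕ, ∑ i, m i = n → ∀ z v : ℝᵈ,
      japaneseBracket z ^ (n + r) * ‖velocityDeriv m f (z, v)‖ ≤ S m)
    {t : ℝ} (ht : 0 < t) (x y : ℝᵈ) :
    ‖f (y, t⁻¹ • (x - y)) - ∑ m ∈ multiIndicesLT d n, (expansionCoeff m / t ^ ∑ i, m i) •
        (∏ i, y i ^ m i) • velocityDeriv m f (y, t⁻¹ • x)‖
      ≤ (d ^ n / n ! / t ^ n * ∑ m ∈ Finset.Nat.antidiagonalTuple d n, S m) *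
        (japaneseBracket y ^ r)⁻¹ := by
  set T := ∑ m ∈ Finset.Nat.antidiagonalTuple d n, S m
  have hy := japaneseBracket_pos y
  have hS₀ (m) (hm : m ∈ Finset.Nat.antidiagonalTuple d n) : 0 ≤ S m :=
    le_trans (by positivity) (hS m (Finset.Nat.mem_antidiagonalTuple.1 hm) y 0)
  have hT : 0 ≤ T := Finset.sum_nonneg hS₀
  have hderiv (m : Fin d → ℕ) (hm : ∑ i, m i = n) (v : ℝᵈ) :
      ‖velocityDeriv m f (y, v)‖ ≤ T / japaneseBracket y ^ (n + r) := by
    rw [le_div_iff₀' (by positivity)]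
    exact (hS m hm y v).trans
      (Finset.single_le_sum hS₀ (Finset.Nat.mem_antidiagonalTuple.2 hm))
  have hsum : ∑ i, |y i| / t ≤ d * (japaneseBracket y / t) :=
    calc ∑ i, |y i| / t
      _ ≤ ∑ _i : Fin d, japaneseBracket y / t := by
          gcongr
          exact abs_apply_le_japaneseBracket y _
      _ = d * (japaneseBracket y / t) := by simp
  calc _ ≤ (∑ i, |y i| / t) ^ n / n ! * (T / japaneseBracket y ^ (n + r)) :=
        norm_sub_velocity_taylor_le hf ht x y hderiv
    _ ≤ (d * (japaneseBracket y / t)) ^ n / n ! * (T / japaneseBracket y ^ (n + r)) := by gcongr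
    _ = d ^ n / n ! / t ^ n * T * (japaneseBracket y ^ r)⁻¹ := by
        rw [mul_pow, div_pow, pow_add]
        field_simp

theorem self_similar_expansion_linear_density_general {n r : ℕ} (hr : d < r) {f : ℝᵈ × ℝᵈ → F}
    (hf : ContDiff ℝ n f) {S : (Fin d → ℕ) → ℝ}
    (hS : ∀ m : Fin d → ℕ, ∑ i, m i ≤ n → ∀ z v : ℝᵈ,
      japaneseBracket z ^ (n + r) * ‖velocityDeriv m f (z, v)‖ ≤ S m)
    {t : ℝ} (ht : 0 < t) (x : ℝᵈ) :
    ‖t ^ d • (∫ v, f (x - t • v, v)) -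
        ∑ m ∈ multiIndicesLT d n, (expansionCoeff m / t ^ ∑ i, m i) •
          ∫ y : ℝᵈ, (∏ i, y i ^ m i) • velocityDeriv m f (y, t⁻¹ • x)‖
      ≤ d ^ n / n ! * (∫ y : ℝᵈ, (japaneseBracket y ^ r)⁻¹) / t ^ n *
        ∑ m ∈ Finset.Nat.antidiagonalTuple d n, S m := by
  have hr' : Module.finrank ℝ ℝᵈ < r := by simpa using hr
  have hterm (m) (hm : m ∈ multiIndicesLT d n) :
      Integrable fun y : ℝᵈ => (expansionCoeff m / t ^ ∑ i, m i) •
        (∏ i, y i ^ m i) • velocityDeriv m f (y, t⁻¹ • x) := by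
    have hmn := (mem_multiIndicesLT.1 hm).le
    have hcont : Continuous (velocityDeriv m f) := continuous_velocityDeriv hf hmn
    exact (integrable_prod_pow_smul hr hmn
      (hcont.comp (by fun_prop : Continuous fun y => (y, t⁻¹ • x))).aestronglyMeasurable
      fun y => hS m hmn y _).smul _
  have hdensity : Integrable fun y : ℝᵈ => f (y, t⁻¹ • (x - y)) := by
    simpa using integrable_prod_pow_smul hr (m := 0) (n := n) (by simp)
      (hf.continuous.comp
        (by fun_prop : Continuous fun y => (y, t⁻¹ • (x - y)))).aestronglyMeasurable
      (fun y => by simpa [velocityDeriv] using hS 0 (by simp) y (t⁻¹ • (x - y)))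
  have hchange : t ^ d • (∫ v, f (x - t • v, v)) = ∫ y, f (y, t⁻¹ • (x - y)) := by
    simpa using pow_smul_integral_comp_sub_smul volume f ht x
  rw [hchange]
  simp only [← integral_smul]
  rw [← integral_finsetSum _ hterm, ← integral_sub hdensity (integrable_finsetSum _ hterm)]
  refine (norm_integral_le_of_norm_le ((integrable_inv_japaneseBracket_pow hr').const_mul _)
    (.of_forall (norm_sub_expansion_le_inv_japaneseBracket_pow hf
      (fun m hm => hS m hm.le) ht x))).trans_eq ?_
  rw [integral_const_mul]
  ring

end Expansion

theorem Dvpow_eq_velocityDeriv (m : Fin 3 → ℕ) (f : E3 × E3 → ℝ) :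
    Dvpow m f = velocityDeriv m f :=
  rfl

theorem MIdx_eq_multiIndicesLT (N : ℕ) : MIdx N = multiIndicesLT 3 (N + 1) := by
  ext m
  simp only [MIdx, Finset.mem_filter, Finset.mem_Iic, mem_multiIndicesLT, Nat.lt_succ_iff,
    and_iff_right_iff_imp]
  exact fun hm i => (Finset.single_le_sum_of_canonicallyOrdered (Finset.mem_univ i)).trans hm

theorem MIdxTop_eq_antidiagonalTuple (N : ℕ) :
    MIdxTop N = Finset.Nat.antidiagonalTuple 3 (N + 1) := by
  ext m
  simp only [MIdxTop, Finset.mem_filter, Finset.mem_Iic, Finset.Nat.mem_antidiagonalTuple,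
    and_iff_right_iff_imp]
  exact fun hm i =>
    (Finset.single_le_sum_of_canonicallyOrdered (Finset.mem_univ i)).trans hm.le

/-- Asymptotic self-similar expansion of the spatial density of the free flow: there are
constants `C_α` (independent of `f₀`) and `C > 0` (depending only on `N`) such that for all
`t ≥ 2`, `x`:
`|t³ ∫ f₀(x−vt,v) dv − Σ_{|α|≤N} (C_α/t^{|α|}) ∫ y^α ∂ᵥ^α f₀(y,x/t) dy|
  ≤ (C/t^{N+1}) Σ_{|α|=N+1} sup ⟨z⟩^{N+5} |∂ᵥ^α f₀|`. -/
theorem self_similar_expansion_linear_density (N : ℕ) :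
    ∃ Cc : (Fin 3 → ℕ) → ℝ, ∃ C : ℝ, 0 < C ∧
      ∀ f₀ : E3 × E3 → ℝ, ContDiff ℝ (N + 1 : ℕ) f₀ →
        ∀ S : (Fin 3 → ℕ) → ℝ,
          (∀ m : Fin 3 → ℕ, (∑ i, m i) ≤ N + 1 →
            ∀ z v : E3,
              Real.sqrt (1 + ‖z‖ ^ 2) ^ (N + 5) * |Dvpow m f₀ (z, v)| ≤ S m) →
          ∀ t : ℝ, 2 ≤ t → ∀ x : E3,
            |t ^ 3 * (∫ v : E3, f₀ (x - t • v, v))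
              - ∑ m ∈ MIdx N, (Cc m / t ^ (∑ i, m i)) *
                  ∫ y : E3, (∏ i, y i ^ m i) * Dvpow m f₀ (y, (1 / t) • x)|
            ≤ (C / t ^ (N + 1)) * ∑ m ∈ MIdxTop N, S m := by
  have hI : 0 < ∫ y : E3, (japaneseBracket y ^ 4)⁻¹ :=
    integral_inv_japaneseBracket_pow_pos (by simp)
  refine ⟨expansionCoeff, 3 ^ (N + 1) / (N + 1)! * ∫ y : E3, (japaneseBracket y ^ 4)⁻¹,
    by positivity, fun f₀ hf₀ S hS t ht x => ?_⟩
  rw [MIdx_eq_multiIndicesLT, MIdxTop_eq_antidiagonalTuple, one_div]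
  simpa [Dvpow_eq_velocityDeriv] using self_similar_expansion_linear_density_general
    (by norm_num : 3 < 4) hf₀ hS (by linarith : 0 < t) x
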